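/- arXiv:1801.03929 — 2 statements merged into one kernel-verified Lean document; each statement's English description precedes it below -/
import Mathlib

section
/- Let D be a finite nonempty index set, partitioned into a collection Δ of nonempty domains δ ⊆ D, with positive weights w_δ > 0 and w_d > 0, and let d_C(x,y) = Σ_{δ∈Δ} w_δ · √(Σ_{d∈δ} w_d·(x_d − y_d)²). Let C = {x ∈ ℝ^D : ∀d, p⁻_d ≤ x_d ≤ p⁺_d} be a nonempty axis-parallel cuboid and ε ≥ 0. Then the ε-neighborhood C^ε = {x ∈ ℝ^D : inf_{y∈C} d_C(x,y) ≤ ε} is star-shaped under d_C with respect to C: for all p ∈ C, z ∈ C^ε and y ∈ ℝ^D, if d_C(p,y) + d_C(y,z) = d_C(p,z) then y ∈ C^ε. -/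
open Finset

/-!
Equality `d(p, y) + d(y, z) = d(p, z)` in the combined metric forces equality in the triangle
inequality of every domain. The domain metrics are Euclidean, hence strictly convex, so each
coordinate of `y` lies between those of `p` and `z`. Given `c ∈ C`, let `c'` agree with `y` in the
coordinates where `y` lies between `p` and `c`, and with `c` in the others, where `y` must lie
between `c` and `z`. Then `c'` is in the box spanned by `p` and `c`, and `|y - c'| ≤ |z - c|`
coordinatewise. A cuboid contains this box, so `y` is at most as far from `C` as `z`.
-/

theorem exists_mem_uIcc_abs_sub_le_of_mem_uIcc {α : Type*} [AddCommGroup α] [LinearOrder α]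
    [IsOrderedAddMonoid α] {p y z : α} (hy : y ∈ Set.uIcc p z) (c : α) :
    ∃ c' ∈ Set.uIcc p c, |y - c'| ≤ |z - c| := by
  by_cases hyc : y ∈ Set.uIcc p c
  · exact ⟨y, hyc, by simp⟩
  · refine ⟨c, Set.right_mem_uIcc, ?_⟩
    have hycz : y ∈ Set.uIcc c z := (Set.uIcc_subset_uIcc_union_uIcc hy).resolve_left hyc
    exact Set.abs_sub_left_of_mem_uIcc hycz

theorem sInf_image_le_sInf_image_of_forall_exists_le {α β : Type*}
    [ConditionallyCompleteLattice β] {f g : α → β} {s : Set α} (hs : s.Nonempty)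
    (hf : BddBelow (f '' s)) (h : ∀ c ∈ s, ∃ c' ∈ s, f c' ≤ g c) :
    sInf (f '' s) ≤ sInf (g '' s) := by
  refine le_csInf (hs.image g) ?_
  rintro _ ⟨c, hc, rfl⟩
  obtain ⟨c', hc', hle⟩ := h c hc
  exact csInf_le_of_le hf (Set.mem_image_of_mem f hc') hle

section DomainDist

variable {D : Type*}

/-- The weighted Euclidean distance on the domain `s`, comparing only the coordinates in `s`. -/
noncomputable def domainDist (s : Finset D) (w : D → ℝ) (x y : D → ℝ) : ℝ :=
  √(∑ d ∈ s, w d * (x d - y d) ^ 2)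

/-- The point of the Euclidean space on the domain `s` obtained by restricting `x` to `s` and
rescaling each coordinate by the square root of its weight, which turns `domainDist` into the
Euclidean distance. -/
noncomputable def scaledRestrict (s : Finset D) (w : D → ℝ) (x : D → ℝ) : EuclideanSpace ℝ s :=
  WithLp.toLp 2 fun d ↦ √(w d) * x d

variable {s : Finset D} {w x y z x' y' : D → ℝ}

theorem domainDist_nonneg : 0 ≤ domainDist s w x y :=
  Real.sqrt_nonneg _

theorem domainDist_le_domainDist_of_abs_sub_le (hw : ∀ d ∈ s, 0 ≤ w d)
    (h : ∀ d ∈ s, |x d - y d| ≤ |x' d - y' d|) : domainDist s w x y ≤ domainDist s w x' y' :=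
  Real.sqrt_le_sqrt <| sum_le_sum fun d hd ↦
    mul_le_mul_of_nonneg_left (sq_le_sq.2 (h d hd)) (hw d hd)

theorem dist_scaledRestrict (hw : ∀ d ∈ s, 0 ≤ w d) :
    dist (scaledRestrict s w x) (scaledRestrict s w y) = domainDist s w x y := by
  rw [EuclideanSpace.dist_eq, domainDist, ← sum_coe_sort s]
  congr 1
  refine sum_congr rfl fun d _ ↦ ?_
  rw [scaledRestrict, scaledRestrict, Real.dist_eq, sq_abs, ← mul_sub, mul_pow,
    Real.sq_sqrt (hw d d.2)]

theorem domainDist_triangle (hw : ∀ d ∈ s, 0 ≤ w d) :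
    domainDist s w x z ≤ domainDist s w x y + domainDist s w y z := by
  simpa only [dist_scaledRestrict hw] using
    dist_triangle (scaledRestrict s w x) (scaledRestrict s w y) (scaledRestrict s w z)

theorem mem_uIcc_of_domainDist_add_eq (hw : ∀ d ∈ s, 0 ≤ w d)
    (h : domainDist s w x y + domainDist s w y z = domainDist s w x z) {d : D} (hd : d ∈ s)
    (hwd : 0 < w d) : y d ∈ Set.uIcc (x d) (z d) := by
  simp only [← dist_scaledRestrict hw] at h
  have hbtw : Wbtw ℝ (√(w d) * x d) (√(w d) * y d) (√(w d) * z d) :=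
    (dist_add_dist_eq_iff.1 h).map
      (EuclideanSpace.proj (𝕜 := ℝ) (⟨d, hd⟩ : s)).toLinearMap.toAffineMap
  rw [Wbtw, affineSegment_eq_segment, segment_eq_uIcc, Set.mem_uIcc] at hbtw
  simpa only [mul_le_mul_iff_right₀ (Real.sqrt_pos.2 hwd), ← Set.mem_uIcc] using hbtw

end DomainDist

section CombinedDist

variable {D ι : Type*} [Fintype ι]

/-- The combined distance `d_C`: the sum over all domains `s j` of the domain distances weighted
by `wδ j`. The domains may be any finite sets of coordinates, so overlaps are allowed. -/
noncomputable def combinedDist (s : ι → Finset D) (wδ : ι → ℝ) (wd : D → ℝ) (x y : D → ℝ) : ℝ :=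
  ∑ j, wδ j * domainDist (s j) wd x y

variable {s : ι → Finset D} {wδ : ι → ℝ} {wd x y z x' y' : D → ℝ}

theorem combinedDist_nonneg (hwδ : ∀ j, 0 ≤ wδ j) : 0 ≤ combinedDist s wδ wd x y :=
  sum_nonneg fun j _ ↦ mul_nonneg (hwδ j) domainDist_nonneg

theorem combinedDist_le_combinedDist_of_abs_sub_le (hwδ : ∀ j, 0 ≤ wδ j) (hwd : ∀ d, 0 ≤ wd d)
    (h : ∀ d, |x d - y d| ≤ |x' d - y' d|) :
    combinedDist s wδ wd x y ≤ combinedDist s wδ wd x' y' :=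
  sum_le_sum fun j _ ↦ mul_le_mul_of_nonneg_left
    (domainDist_le_domainDist_of_abs_sub_le (fun d _ ↦ hwd d) fun d _ ↦ h d) (hwδ j)

theorem domainDist_add_eq_of_combinedDist_add_eq (hwδ : ∀ j, 0 ≤ wδ j) (hwd : ∀ d, 0 ≤ wd d)
    (h : combinedDist s wδ wd x y + combinedDist s wδ wd y z = combinedDist s wδ wd x z)
    {j : ι} (hj : 0 < wδ j) :
    domainDist (s j) wd x y + domainDist (s j) wd y z = domainDist (s j) wd x z := by
  simp only [combinedDist, ← sum_add_distrib, ← mul_add] at h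
  have hle : ∀ i ∈ univ, wδ i * domainDist (s i) wd x z ≤
      wδ i * (domainDist (s i) wd x y + domainDist (s i) wd y z) := fun i _ ↦
    mul_le_mul_of_nonneg_left (domainDist_triangle fun d _ ↦ hwd d) (hwδ i)
  exact (mul_left_cancel₀ hj.ne' ((sum_eq_sum_iff_of_le hle).1 h.symm j (mem_univ j))).symm

theorem mem_uIcc_of_combinedDist_add_eq (hs : ∀ d, ∃ j, d ∈ s j) (hwδ : ∀ j, 0 < wδ j)
    (hwd : ∀ d, 0 < wd d)
    (h : combinedDist s wδ wd x y + combinedDist s wδ wd y z = combinedDist s wδ wd x z) (d : D) :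
    y d ∈ Set.uIcc (x d) (z d) := by
  obtain ⟨j, hdj⟩ := hs d
  have hdomain : domainDist (s j) wd x y + domainDist (s j) wd y z = domainDist (s j) wd x z :=
    domainDist_add_eq_of_combinedDist_add_eq (fun i ↦ (hwδ i).le) (fun d ↦ (hwd d).le) h (hwδ j)
  exact mem_uIcc_of_domainDist_add_eq (fun d _ ↦ (hwd d).le) hdomain hdj (hwd d)

theorem exists_mem_uIcc_combinedDist_le (hwδ : ∀ j, 0 ≤ wδ j) (hwd : ∀ d, 0 ≤ wd d)
    {p : D → ℝ} (hy : ∀ d, y d ∈ Set.uIcc (p d) (z d)) (c : D → ℝ) :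
    ∃ c' ∈ Set.uIcc p c, combinedDist s wδ wd y c' ≤ combinedDist s wδ wd z c := by
  choose c' hc' hle using fun d ↦ exists_mem_uIcc_abs_sub_le_of_mem_uIcc (hy d) (c d)
  have hbox : c' ∈ Set.uIcc p c := by
    rw [← Set.pi_univ_uIcc]
    exact fun d _ ↦ hc' d
  exact ⟨c', hbox, combinedDist_le_combinedDist_of_abs_sub_le hwδ hwd hle⟩

/-- The condition on `C` also covers a union of cuboids, with `p` in their common intersection. -/
theorem cuboid_eps_neighborhood_star_shaped_general (hs : ∀ d, ∃ j, d ∈ s j)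
    (hwδ : ∀ j, 0 < wδ j) (hwd : ∀ d, 0 < wd d) {C : Set (D → ℝ)} {p : D → ℝ} (hp : p ∈ C)
    (hC : ∀ c ∈ C, Set.uIcc p c ⊆ C) {ε : ℝ} (hz : sInf (combinedDist s wδ wd z '' C) ≤ ε)
    (h : combinedDist s wδ wd p y + combinedDist s wδ wd y z = combinedDist s wδ wd p z) :
    sInf (combinedDist s wδ wd y '' C) ≤ ε := by
  have hbdd : BddBelow (combinedDist s wδ wd y '' C) :=
    ⟨0, Set.forall_mem_image.2 fun _ _ ↦ combinedDist_nonneg fun j ↦ (hwδ j).le⟩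
  refine (sInf_image_le_sInf_image_of_forall_exists_le ⟨p, hp⟩ hbdd fun c hc ↦ ?_).trans hz
  obtain ⟨c', hc', hle⟩ := exists_mem_uIcc_combinedDist_le (fun j ↦ (hwδ j).le)
    (fun d ↦ (hwd d).le) (mem_uIcc_of_combinedDist_add_eq hs hwδ hwd h) c
  exact ⟨c', hC c hc hc', hle⟩

end CombinedDist

/-- The ε-neighborhood (under the combined metric d_C) of a
nonempty axis-parallel cuboid C is star-shaped under d_C with respect to C.
The partition of `D` into nonempty domains is given by the fibers of the
surjective block map `bl : D → ι`. -/
theorem cuboid_eps_neighborhood_star_shaped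
    {D ι : Type*} [Fintype D] [Nonempty D] [Fintype ι] [DecidableEq ι]
    (bl : D → ι) (hbl : Function.Surjective bl)
    (wδ : ι → ℝ) (wd : D → ℝ)
    (hwδ : ∀ j, 0 < wδ j) (hwd : ∀ d, 0 < wd d)
    (dC : (D → ℝ) → (D → ℝ) → ℝ)
    (hdC : ∀ x y, dC x y = ∑ j : ι, wδ j *
      Real.sqrt (∑ d ∈ univ.filter (fun d => bl d = j), wd d * (x d - y d) ^ 2))
    (pm pp : D → ℝ) (C : Set (D → ℝ))
    (hC : C = {x : D → ℝ | ∀ d, pm d ≤ x d ∧ x d ≤ pp d})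
    (hCne : C.Nonempty)
    (ε : ℝ) (hε : 0 ≤ ε)
    (Cε : Set (D → ℝ))
    (hCε : Cε = {x : D → ℝ | sInf ((fun y => dC x y) '' C) ≤ ε}) :
    ∀ p ∈ C, ∀ z ∈ Cε, ∀ y : D → ℝ,
      dC p y + dC y z = dC p z → y ∈ Cε := by
  subst hC hCε
  obtain rfl : dC = combinedDist (fun j ↦ univ.filter (bl · = j)) wδ wd := funext₂ hdC
  have hbox : {x : D → ℝ | ∀ d, pm d ≤ x d ∧ x d ≤ pp d} = Set.Icc pm pp := by
    ext x
    simp [Pi.le_def, forall_and]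
  rw [hbox]
  exact fun p hp z hz y h ↦ cuboid_eps_neighborhood_star_shaped_general
    (fun d ↦ ⟨bl d, by simp⟩) hwδ hwd hp (fun c hc ↦ Set.uIcc_subset_Icc hp hc) hz h
end

section
/- Let D be a finite nonempty index set with n = |D|, partitioned into a collection Δ of nonempty domains δ ⊆ D, with positive weights w_δ > 0 and w_d > 0, and let d_C(x,y) = Σ_{δ∈Δ} w_δ · √(Σ_{d∈δ} w_d·(x_d − y_d)²); for d ∈ D write δ(d) for the unique domain containing d. Let C = {x ∈ ℝ^D : ∀d, p⁻_d ≤ x_d ≤ p⁺_d} be a nonempty axis-parallel cuboid with side lengths b_d = p⁺_d − p⁻_d, let μ₀ ∈ (0,1] and c > 0, and define the fuzzified cuboid membership μ(x) = μ₀ · max_{y∈C} e^{−c·d_C(x,y)}. Set a_d = w_{δ(d)} · √(w_d) · b_d · c. Then the integral ∫_{ℝ^D} μ(x) dx equals ( μ₀ / ( cⁿ · ∏_{d∈D} (w_{δ(d)} · √(w_d)) ) ) · Σ_{T⊆D} ( ∏_{d ∈ D∖T} a_d ) · ∏_{δ∈Δ, δ∩T ≠ ∅} ( |δ∩T|! ·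 π^{|δ∩T|/2} / Γ(|δ∩T|/2 + 1) ), where the sum runs over all subsets T of D (with the empty product equal to 1). -/
open Finset
open MeasureTheory Module
open scoped NNReal

/-! With respect to Lebesgue measure, the signed displacement of `t : ℝ` from its nearest point in
`[p, q]` is distributed as Lebesgue measure plus an atom of mass `q - p` at `0`. Multiplying these
laws over the coordinates and expanding the product, the displacement of a point from a cuboid is
distributed as a sum over the sets `T` of coordinates that are actually displaced: the coordinates
outside `T` contribute side lengths, those in `T` a copy of `ℝ^T`. There the exponential of minus
the block norm factors over the blocks, and the integral of `exp (-‖x‖)` over an `m`-dimensional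
space is `m!` times the volume of the unit ball. The weights are removed beforehand by rescaling
the coordinates. -/

section Displacement

/-- The displacement of `x` from `p ⊔ q ⊓ x`, which in a product of linear orders with `p ≤ q` is
the point of the order interval `[p, q]` nearest to `x` in each coordinate. -/
def excess {α : Type*} [Lattice α] [Sub α] (p q x : α) : α := x - p ⊔ q ⊓ x

theorem excess_of_le_left {α : Type*} [Lattice α] [Sub α] {p q t : α} (h : t ≤ p) :
    excess p q t = t - p := by
  rw [excess, sup_eq_left.2 (inf_le_right.trans h)]

theorem excess_of_mem_Icc {α : Type*} [Lattice α] [AddGroup α] {p q t : α} (h : t ∈ Set.Icc p q) :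
    excess p q t = 0 := by
  rw [excess, inf_eq_right.2 h.2, sup_eq_right.2 h.1, sub_self]

theorem excess_of_right_le {α : Type*} [Lattice α] [Sub α] {p q t : α} (hpq : p ≤ q) (h : q ≤ t) :
    excess p q t = t - q := by
  rw [excess, inf_eq_left.2 h, sup_eq_right.2 hpq]

theorem abs_excess_le_abs_sub {p q s : ℝ} (t : ℝ) (hs : s ∈ Set.Icc p q) :
    |excess p q t| ≤ |t - s| := by
  obtain ⟨hps, hsq⟩ := hs
  rcases le_total t p with htp | hpt
  · rw [excess_of_le_left htp, abs_of_nonpos (by linarith), abs_of_nonpos (by linarith)]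
    linarith
  rcases le_total t q with htq | hqt
  · simp [excess_of_mem_Icc ⟨hpt, htq⟩]
  · rw [excess_of_right_le (hps.trans hsq) hqt, abs_of_nonneg (by linarith),
      abs_of_nonneg (by linarith)]
    linarith

theorem mul_excess {D : Type*} {k : D → ℝ} (hk : 0 ≤ k) (p q x : D → ℝ) :
    k * excess p q x = excess (k * p) (k * q) (k * x) := by
  ext d
  simp [excess, mul_sub, mul_max_of_nonneg _ _ (hk d), mul_min_of_nonneg _ _ (hk d)]

@[fun_prop]
theorem measurable_excess (p q : ℝ) : Measurable (excess p q) := by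
  unfold excess
  fun_prop

theorem map_restrict_volume_of_eqOn_sub {f : ℝ → ℝ} {a : ℝ} {s : Set ℝ} (hs : MeasurableSet s)
    (hf : Set.EqOn f (· - a) ((· - a) ⁻¹' s)) :
    (volume.restrict ((· - a) ⁻¹' s)).map f = volume.restrict s := by
  rw [← ((measurePreserving_sub_right volume a).restrict_preimage hs).map_eq]
  exact Measure.map_congr <| hf.aeEq_restrict <| hs.preimage <| measurable_id.sub_const a

theorem map_excess_volume {p q : ℝ} (hpq : p ≤ q) :
    (volume : Measure ℝ).map (excess p q) = volume + (q - p).toNNReal • Measure.dirac 0 := by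
  have map_left : (volume.restrict (Set.Iio p)).map (excess p q) = volume.restrict (Set.Iio 0) := by
    rw [← map_restrict_volume_of_eqOn_sub (f := excess p q) (a := p) (s := Set.Iio 0)
      measurableSet_Iio, Set.preimage_sub_const_Iio, zero_add]
    exact fun t ht ↦ excess_of_le_left (sub_neg.1 ht).le
  have map_middle : (volume.restrict (Set.Icc p q)).map (excess p q) =
      (q - p).toNNReal • Measure.dirac 0 := by
    have hconst : Set.EqOn (excess p q) (fun _ ↦ 0) (Set.Icc p q) := fun _ ↦ excess_of_mem_Icc
    rw [Measure.map_congr (hconst.aeEq_restrict measurableSet_Icc), Measure.map_const,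
      Measure.restrict_apply_univ, Real.volume_Icc]
    rfl
  have map_right :
      (volume.restrict (Set.Ioi q)).map (excess p q) = volume.restrict (Set.Ioi 0) := by
    rw [← map_restrict_volume_of_eqOn_sub (f := excess p q) (a := q) (s := Set.Ioi 0)
      measurableSet_Ioi, Set.preimage_sub_const_Ioi, zero_add]
    exact fun t ht ↦ excess_of_right_le hpq (sub_pos.1 ht).le
  have hdisj : Disjoint (Set.Iio p) (Set.Icc p q) :=
    Set.disjoint_left.2 fun _ ht ht' ↦ (not_le_of_gt ht) ht'.1
  have hsplit : (volume : Measure ℝ) = volume.restrict (Set.Iio p) +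
      volume.restrict (Set.Icc p q) + volume.restrict (Set.Ioi q) := by
    rw [← Measure.restrict_union hdisj measurableSet_Icc, Set.Iio_union_Icc_eq_Iic hpq,
      ← Set.compl_Iic, Measure.restrict_add_restrict_compl measurableSet_Iic]
  conv_lhs => rw [hsplit]
  rw [Measure.map_add _ _ (measurable_excess p q), Measure.map_add _ _ (measurable_excess p q),
    map_left, map_middle, map_right, add_right_comm, restrict_Ioi_eq_restrict_Ici, ← Set.compl_Iio,
    Measure.restrict_add_restrict_compl measurableSet_Iio]

end Displacement

section ProductMeasure

variable {D : Type*} [Fintype D] {X : D → Type*} [∀ d, MeasurableSpace (X d)]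

theorem map_updateFinset_pi_apply_univ_pi [DecidableEq D] (ν : ∀ d, Measure (X d))
    [∀ d, SigmaFinite (ν d)] (x : ∀ d, X d) (T : Finset D) {s : ∀ d, Set (X d)}
    (hs : ∀ d, MeasurableSet (s d)) :
    (Measure.pi fun d : T ↦ ν d).map (Function.updateFinset x T) (Set.univ.pi s) =
      (∏ d ∈ T, ν d (s d)) * ∏ d ∈ univ \ T, Measure.dirac (x d) (s d) := by
  rw [Measure.map_apply measurable_updateFinset (.univ_pi hs)]
  by_cases hx : ∀ d ∉ T, x d ∈ s d
  · have hpre : Function.updateFinset x T ⁻¹' Set.univ.pi s = Set.univ.pi fun d : T ↦ s d := by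
      ext z
      simp only [Set.mem_preimage, Set.mem_univ_pi, Function.updateFinset]
      refine ⟨fun h d ↦ by simpa using h d, fun h d ↦ ?_⟩
      split_ifs with hd
      exacts [h ⟨d, hd⟩, hx d hd]
    have hdirac : ∀ d ∈ univ \ T, Measure.dirac (x d) (s d) = 1 := fun d hd ↦
      Measure.dirac_apply_of_mem (hx d (mem_sdiff.1 hd).2)
    rw [hpre, Measure.pi_pi, prod_coe_sort T fun d ↦ ν d (s d), prod_eq_one hdirac, mul_one]
  · push Not at hx
    obtain ⟨d, hd, hxd⟩ := hx
    have hpre : Function.updateFinset x T ⁻¹' Set.univ.pi s = ∅ :=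
      Set.eq_empty_of_forall_notMem fun z hz ↦
        hxd <| by simpa [Function.updateFinset, hd] using hz d (Set.mem_univ d)
    have hdirac : Measure.dirac (x d) (s d) = 0 := by simp [Measure.dirac_apply' _ (hs d), hxd]
    rw [hpre, measure_empty, prod_eq_zero (mem_sdiff.2 ⟨mem_univ d, hd⟩) hdirac, mul_zero]

theorem pi_add_smul_dirac [DecidableEq D] (ν : ∀ d, Measure (X d)) [∀ d, SigmaFinite (ν d)]
    (a : D → ℝ≥0) (x : ∀ d, X d) :
    Measure.pi (fun d ↦ ν d + a d • Measure.dirac (x d)) =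
      ∑ T ∈ (univ : Finset D).powerset,
        (∏ d ∈ univ \ T, a d) • (Measure.pi fun d : T ↦ ν d).map (Function.updateFinset x T) := by
  refine Measure.pi_eq fun s hs ↦ ?_
  simp only [Measure.finsetSum_apply, Measure.smul_apply, Measure.add_apply,
    map_updateFinset_pi_apply_univ_pi ν x _ hs, prod_add, ENNReal.smul_def, smul_eq_mul,
    prod_mul_distrib, ENNReal.ofNNReal_finsetProd, mul_left_comm]

theorem measurePreserving_pi_fiberwise {ι : Type*} [Fintype ι] [DecidableEq ι] (f : D → ι)
    (ν : ∀ d, Measure (X d)) [∀ d, SigmaFinite (ν d)] :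
    MeasurePreserving (fun (z : ∀ j, ∀ d : {d // f d = j}, X d) d ↦ z (f d) ⟨d, rfl⟩)
      (Measure.pi fun j ↦ Measure.pi fun d : {d // f d = j} ↦ ν d) (Measure.pi ν) := by
  have hmeas : Measurable fun (z : ∀ j, ∀ d : {d // f d = j}, X d) d ↦ z (f d) ⟨d, rfl⟩ := by
    fun_prop
  refine ⟨hmeas, (Measure.pi_eq fun s hs ↦ ?_).symm⟩
  have hpre : (fun (z : ∀ j, ∀ d : {d // f d = j}, X d) d ↦ z (f d) ⟨d, rfl⟩) ⁻¹' Set.univ.pi s =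
      Set.univ.pi fun j ↦ Set.univ.pi fun d : {d // f d = j} ↦ s d := by
    ext z
    simp only [Set.mem_preimage, Set.mem_univ_pi]
    exact ⟨fun h j ⟨d, hd⟩ ↦ by subst hd; exact h d, fun h d ↦ h _ ⟨d, rfl⟩⟩
  rw [Measure.map_apply hmeas (.univ_pi hs), hpre]
  simp only [Measure.pi_pi]
  exact Fintype.prod_fiberwise f fun d ↦ ν d (s d)

theorem integral_comp_mul_pi {E : Type*} [NormedAddCommGroup E] [NormedSpace ℝ E] {k : D → ℝ}
    (hk : ∀ d, k d ≠ 0) (g : (D → ℝ) → E) :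
    ∫ x, g (k * x) = |(∏ d, k d)⁻¹| • ∫ x, g x := by
  classical
  have hdet : (Matrix.diagonal k).det ≠ 0 := by
    simpa [Matrix.det_diagonal, prod_ne_zero_iff] using hk
  let e : (D → ℝ) ≃ᵐ (D → ℝ) := .piCongrRight fun d ↦ .mulLeft₀ (k d) (hk d)
  have he : ⇑e = Matrix.toLin' (Matrix.diagonal k) := by
    ext x d
    rw [Matrix.toLin'_apply, Matrix.mulVec_diagonal]
    rfl
  have hmap := Real.map_matrix_volume_pi_eq_smul_volume_pi hdet
  rw [← he, Matrix.det_diagonal] at hmap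
  change ∫ x, g (e x) = _
  rw [← integral_map_equiv, hmap, integral_smul_measure, ENNReal.toReal_ofReal (abs_nonneg _)]

end ProductMeasure

theorem integral_comp_excess {D E : Type*} [Fintype D] [DecidableEq D] [NormedAddCommGroup E]
    [NormedSpace ℝ E] {p q : D → ℝ} (hpq : p ≤ q) {F : (D → ℝ) → E} (hF : StronglyMeasurable F)
    (hint : ∀ T : Finset D, Integrable fun z : T → ℝ ↦ F (Function.updateFinset 0 T z)) :
    ∫ x, F (excess p q x) = ∑ T ∈ (univ : Finset D).powerset,
      (∏ d ∈ univ \ T, (q d - p d)) • ∫ z : T → ℝ, F (Function.updateFinset 0 T z) := by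
  have hmap : (volume : Measure (D → ℝ)).map (excess p q) = ∑ T ∈ (univ : Finset D).powerset,
      (∏ d ∈ univ \ T, (q d - p d).toNNReal) •
        (volume : Measure (T → ℝ)).map (Function.updateFinset (0 : D → ℝ) T) := by
    have (d : D) : SigmaFinite ((volume : Measure ℝ).map (excess (p d) (q d))) := by
      rw [map_excess_volume (hpq d)]
      infer_instance
    have hpi := Measure.pi_map_pi (μ := fun _ : D ↦ (volume : Measure ℝ))
      fun d ↦ (measurable_excess (p d) (q d)).aemeasurable
    simp only [map_excess_volume (hpq _), pi_add_smul_dirac] at hpi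
    exact hpi
  have hexcess : Measurable (excess p q) :=
    measurable_pi_iff.2 fun d ↦ (measurable_excess (p d) (q d)).comp (measurable_pi_apply d)
  have hint_map (T : Finset D) :
      Integrable F ((volume : Measure (T → ℝ)).map (Function.updateFinset (0 : D → ℝ) T)) :=
    (integrable_map_measure hF.aestronglyMeasurable measurable_updateFinset.aemeasurable).2 (hint T)
  rw [← integral_map hexcess.aemeasurable hF.aestronglyMeasurable, hmap,
    integral_finsetSum_measure fun T _ ↦ (hint_map T).smul_measure_nnreal]
  refine sum_congr rfl fun T _ ↦ ?_
  rw [integral_smul_nnreal_measure, NNReal.smul_def, NNReal.coe_prod,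
    prod_congr rfl fun d _ ↦ Real.coe_toNNReal _ (sub_nonneg.2 (hpq d)),
    integral_map measurable_updateFinset.aemeasurable hF.aestronglyMeasurable]

section Radial

/-- The integral of `exp (-‖x‖)` over an `m`-dimensional Euclidean space, that is, `m!` times the
volume of its unit ball. -/
noncomputable def expNegNormMass (m : ℕ) : ℝ :=
  m.factorial * Real.pi ^ ((m : ℝ) / 2) / Real.Gamma ((m : ℝ) / 2 + 1)

theorem expNegNormMass_zero : expNegNormMass 0 = 1 := by simp [expNegNormMass]

theorem expNegNormMass_pos (m : ℕ) : 0 < expNegNormMass m := by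
  have := Real.Gamma_pos_of_pos (s := (m : ℝ) / 2 + 1) (by positivity)
  unfold expNegNormMass
  positivity

theorem prod_expNegNormMass_fiber_ne_empty {D ι : Type*} [DecidableEq D] [Fintype ι]
    [DecidableEq ι] (f : D → ι) (T : Finset D) :
    ∏ j with {d ∈ T | f d = j} ≠ ∅, expNegNormMass #{d ∈ T | f d = j} =
      ∏ j, expNegNormMass #{d ∈ T | f d = j} :=
  prod_filter_of_ne fun j _ hj hempty ↦ hj (by rw [hempty, card_empty, expNegNormMass_zero])

theorem integral_exp_neg_norm {E : Type*} [NormedAddCommGroup E] [NormedSpace ℝ E]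
    [FiniteDimensional ℝ E] [MeasurableSpace E] [BorelSpace E] (μ : Measure E)
    [μ.IsAddHaarMeasure] :
    ∫ x, Real.exp (-‖x‖) ∂μ = (finrank ℝ E).factorial * μ.real (Metric.ball 0 1) := by
  have : 0 ≤ ∫ x, Real.exp (-‖x‖) ∂μ := integral_nonneg fun _ ↦ (Real.exp_pos _).le
  have hball := measure_unitBall_eq_integral_div_gamma μ one_pos
  simp only [Real.rpow_one, div_one, Real.Gamma_nat_eq_factorial] at hball
  rw [measureReal_def, hball, ENNReal.toReal_ofReal (by positivity)]
  field_simp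

theorem volume_real_euclideanSpace_unitBall (κ : Type*) [Fintype κ] :
    volume.real (Metric.ball (0 : EuclideanSpace ℝ κ) 1) =
      √Real.pi ^ Fintype.card κ / Real.Gamma (Fintype.card κ / 2 + 1) := by
  rcases isEmpty_or_nonempty κ
  · simp [measureReal_def, volume_euclideanSpace_eq_dirac]
  · have := Real.Gamma_pos_of_pos (s := (Fintype.card κ : ℝ) / 2 + 1) (by positivity)
    rw [measureReal_def, EuclideanSpace.volume_ball, ENNReal.ofReal_one, one_pow, one_mul,
      ENNReal.toReal_ofReal (by positivity)]

theorem integral_exp_neg_sqrt_sum_sq (κ : Type*) [Fintype κ] :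
    ∫ z : κ → ℝ, Real.exp (-√(∑ i, z i ^ 2)) = expNegNormMass (Fintype.card κ) := by
  have htoLp := (PiLp.volume_preserving_toLp κ).integral_comp
    (MeasurableEquiv.toLp 2 (κ → ℝ)).measurableEmbedding
    (fun x : EuclideanSpace ℝ κ ↦ Real.exp (-‖x‖))
  have hpow : √Real.pi ^ Fintype.card κ = Real.pi ^ ((Fintype.card κ : ℝ) / 2) := by
    rw [Real.sqrt_eq_rpow, ← Real.rpow_mul_natCast Real.pi_pos.le, one_div_mul_eq_div]
  rw [integral_exp_neg_norm, volume_real_euclideanSpace_unitBall, finrank_euclideanSpace, hpow,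
    ← mul_div_assoc] at htoLp
  simpa only [expNegNormMass, EuclideanSpace.norm_eq, Real.norm_eq_abs, sq_abs] using htoLp

end Radial

section BlockNorm

variable {D ι : Type*} [Fintype D] [Fintype ι] [DecidableEq ι]

/-- The sum of the Euclidean norms of the restrictions of `y` to the blocks of a partition, the
blocks being the fibres of `f`. -/
noncomputable def blockNorm (f : D → ι) (y : D → ℝ) : ℝ :=
  ∑ j, √(∑ d with f d = j, y d ^ 2)

@[fun_prop]
theorem continuous_blockNorm (f : D → ι) : Continuous (blockNorm f) := by
  unfold blockNorm
  fun_prop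

theorem blockNorm_le_blockNorm (f : D → ι) {y z : D → ℝ} (h : ∀ d, |y d| ≤ |z d|) :
    blockNorm f y ≤ blockNorm f z :=
  sum_le_sum fun _ _ ↦ Real.sqrt_le_sqrt <| sum_le_sum fun d _ ↦ sq_le_sq.2 (h d)

theorem blockNorm_mul_sqrt {f : D → ι} {v : ι → ℝ} (hv : 0 ≤ v) {w : D → ℝ} (hw : 0 ≤ w)
    (y : D → ℝ) :
    blockNorm f (fun d ↦ v (f d) * √(w d) * y d) =
      ∑ j, v j * √(∑ d with f d = j, w d * y d ^ 2) := by
  refine sum_congr rfl fun j _ ↦ ?_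
  have hsum : ∑ d with f d = j, (v (f d) * √(w d) * y d) ^ 2 =
      v j ^ 2 * ∑ d with f d = j, w d * y d ^ 2 := by
    rw [mul_sum]
    refine sum_congr rfl fun d hd ↦ ?_
    rw [(mem_filter.1 hd).2, mul_pow, mul_pow, Real.sq_sqrt (hw d), mul_assoc]
  rw [hsum, Real.sqrt_mul (sq_nonneg _), Real.sqrt_sq (hv j)]

theorem blockNorm_updateFinset_zero [DecidableEq D] (f : D → ι) (T : Finset D) (z : T → ℝ) :
    blockNorm f (Function.updateFinset 0 T z) = blockNorm (fun d : T ↦ f d) z := by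
  refine sum_congr rfl fun j _ ↦ congrArg _ ?_
  simp only [sum_filter]
  rw [← sum_subset (subset_univ T), ← sum_coe_sort T]
  · simp [Function.updateFinset]
  · intro d _ hd
    simp [Function.updateFinset, hd]

theorem integral_exp_neg_blockNorm (f : D → ι) :
    ∫ z, Real.exp (-blockNorm f z) = ∏ j, expNegNormMass #{d | f d = j} := by
  have hglue := measurePreserving_pi_fiberwise f fun _ ↦ (volume : Measure ℝ)
  have hfactor (z : ∀ j, {d // f d = j} → ℝ) :
      Real.exp (-blockNorm f fun d ↦ z (f d) ⟨d, rfl⟩) = ∏ j, Real.exp (-√(∑ d, z j d ^ 2)) := by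
    rw [blockNorm, ← sum_neg_distrib, Real.exp_sum]
    refine prod_congr rfl fun j _ ↦ ?_
    rw [sum_subtype (p := fun d ↦ f d = j) _ (by simp)]
    congr! 4 with ⟨d, rfl⟩
  rw [volume_pi, ← hglue.map_eq, integral_map hglue.aemeasurable (by fun_prop)]
  simp_rw [hfactor]
  rw [integral_fintype_prod_eq_prod fun j (w : {d // f d = j} → ℝ) ↦ Real.exp (-√(∑ d, w d ^ 2))]
  simp only [← volume_pi, integral_exp_neg_sqrt_sum_sq, Fintype.card_subtype]

theorem integral_exp_neg_blockNorm_updateFinset_zero [DecidableEq D] (f : D → ι) (T : Finset D) :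
    ∫ z : T → ℝ, Real.exp (-blockNorm f (Function.updateFinset 0 T z)) =
      ∏ j, expNegNormMass #{d ∈ T | f d = j} := by
  simp only [blockNorm_updateFinset_zero, integral_exp_neg_blockNorm]
  refine prod_congr rfl fun j _ ↦ congrArg _ ?_
  rw [univ_eq_attach, filter_attach (fun d ↦ f d = j) T, card_map, card_attach]

theorem integral_exp_neg_blockNorm_excess [DecidableEq D] (f : D → ι) {p q : D → ℝ} (hpq : p ≤ q) :
    ∫ x, Real.exp (-blockNorm f (excess p q x)) = ∑ T ∈ (univ : Finset D).powerset,
      (∏ d ∈ univ \ T, (q d - p d)) * ∏ j, expNegNormMass #{d ∈ T | f d = j} := by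
  have hcont : Continuous fun y ↦ Real.exp (-blockNorm f y) := by fun_prop
  have hint (T : Finset D) :
      Integrable fun z : T → ℝ ↦ Real.exp (-blockNorm f (Function.updateFinset 0 T z)) := by
    refine .of_integral_ne_zero ?_
    rw [integral_exp_neg_blockNorm_updateFinset_zero]
    exact prod_ne_zero_iff.2 fun j _ ↦ (expNegNormMass_pos _).ne'
  simp_rw [integral_comp_excess hpq hcont.stronglyMeasurable hint,
    integral_exp_neg_blockNorm_updateFinset_zero, smul_eq_mul]

theorem isLeast_blockNorm_mul_sub (f : D → ι) (k : D → ℝ) {p q : D → ℝ} (hpq : p ≤ q)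
    (x : D → ℝ) :
    IsLeast ((fun y ↦ blockNorm f (k * (x - y))) '' Set.Icc p q)
      (blockNorm f (k * excess p q x)) := by
  refine ⟨⟨p ⊔ q ⊓ x, ⟨le_sup_left, sup_le hpq inf_le_left⟩, rfl⟩, ?_⟩
  rintro _ ⟨y, hy, rfl⟩
  refine blockNorm_le_blockNorm f fun d ↦ ?_
  simp only [Pi.mul_apply, Pi.sub_apply, abs_mul]
  refine mul_le_mul_of_nonneg_left ?_ (abs_nonneg _)
  exact abs_excess_le_abs_sub (x d) ⟨hy.1 d, hy.2 d⟩

theorem sSup_exp_neg_blockNorm_mul_sub (f : D → ι) (k : D → ℝ) {p q : D → ℝ} (hpq : p ≤ q)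
    (x : D → ℝ) :
    sSup ((fun y ↦ Real.exp (-blockNorm f (k * (x - y)))) '' Set.Icc p q) =
      Real.exp (-blockNorm f (k * excess p q x)) := by
  have hanti : Antitone fun r ↦ Real.exp (-r) := fun _ _ h ↦ Real.exp_le_exp.2 (neg_le_neg h)
  have hmax := hanti.map_isLeast (isLeast_blockNorm_mul_sub f k hpq x)
  rw [Set.image_image] at hmax
  exact hmax.csSup_eq

theorem integral_sSup_exp_neg_blockNorm_mul_sub [DecidableEq D] (f : D → ι) {k : D → ℝ}
    (hk : ∀ d, 0 < k d) {p q : D → ℝ} (hpq : p ≤ q) :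
    ∫ x, sSup ((fun y ↦ Real.exp (-blockNorm f (k * (x - y)))) '' Set.Icc p q) =
      (∏ d, k d)⁻¹ * ∑ T ∈ (univ : Finset D).powerset,
        (∏ d ∈ univ \ T, k d * (q d - p d)) * ∏ j, expNegNormMass #{d ∈ T | f d = j} := by
  have hk0 : 0 ≤ k := fun d ↦ (hk d).le
  have hkpq : k * p ≤ k * q := mul_le_mul_of_nonneg_left hpq hk0
  simp_rw [sSup_exp_neg_blockNorm_mul_sub f k hpq, mul_excess hk0]
  rw [integral_comp_mul_pi (fun d ↦ (hk d).ne')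
      fun x ↦ Real.exp (-blockNorm f (excess (k * p) (k * q) x)),
    integral_exp_neg_blockNorm_excess f hkpq, smul_eq_mul,
    abs_of_nonneg (inv_nonneg.2 (prod_nonneg fun d _ ↦ hk0 d))]
  simp only [Pi.mul_apply, mul_sub]

end BlockNorm

/-- The measure (integral of the membership function) of a
fuzzified cuboid equals
(μ₀/(cⁿ·∏_d w_{δ(d)}·√w_d)) · Σ_{T⊆D} (∏_{d∉T} a_d) ·
∏_{δ: δ∩T≠∅} (|δ∩T|!·π^{|δ∩T|/2}/Γ(|δ∩T|/2+1)),
where a_d = w_{δ(d)}·√w_d·b_d·c and b_d = p⁺_d − p⁻_d.  The partition of `D`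
into nonempty domains is given by the fibers of the surjective block map
`bl : D → ι`. -/
theorem measure_of_fuzzified_cuboid
    {D ι : Type*} [Fintype D] [Nonempty D] [DecidableEq D]
    [Fintype ι] [DecidableEq ι]
    (bl : D → ι) (hbl : Function.Surjective bl)
    (wδ : ι → ℝ) (wd : D → ℝ)
    (hwδ : ∀ j, 0 < wδ j) (hwd : ∀ d, 0 < wd d)
    (dC : (D → ℝ) → (D → ℝ) → ℝ)
    (hdC : ∀ x y, dC x y = ∑ j : ι, wδ j *
      Real.sqrt (∑ d ∈ univ.filter (fun d => bl d = j), wd d * (x d - y d) ^ 2))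
    (n : ℕ) (hn : n = Fintype.card D)
    (pm pp : D → ℝ) (hple : ∀ d, pm d ≤ pp d)
    (C : Set (D → ℝ))
    (hC : C = {x : D → ℝ | ∀ d, pm d ≤ x d ∧ x d ≤ pp d})
    (μ₀ c : ℝ) (hμ₀ : μ₀ ∈ Set.Ioc (0 : ℝ) 1) (hc : 0 < c)
    (μ : (D → ℝ) → ℝ)
    (hμ : ∀ x, μ x = μ₀ * sSup ((fun y => Real.exp (-c * dC x y)) '' C))
    (a : D → ℝ)
    (ha : ∀ d, a d = wδ (bl d) * Real.sqrt (wd d) * (pp d - pm d) * c) :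
    ∫ x : D → ℝ, μ x =
      (μ₀ / (c ^ n * ∏ d : D, (wδ (bl d) * Real.sqrt (wd d)))) *
        ∑ T ∈ (univ : Finset D).powerset,
          (∏ d ∈ univ \ T, a d) *
          ∏ j ∈ univ.filter (fun j => T.filter (fun d => bl d = j) ≠ ∅),
            ((Nat.factorial (T.filter (fun d => bl d = j)).card : ℝ) *
              Real.pi ^ (((T.filter (fun d => bl d = j)).card : ℝ) / 2) /
              Real.Gamma (((T.filter (fun d => bl d = j)).card : ℝ) / 2 + 1)) := by
  set k : D → ℝ := fun d ↦ c * wδ (bl d) * √(wd d) with hk_def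
  have hk (d : D) : 0 < k d := mul_pos (mul_pos hc (hwδ _)) (Real.sqrt_pos.2 (hwd d))
  have hcdC (x y : D → ℝ) : -c * dC x y = -blockNorm bl (k * (x - y)) := by
    simp_rw [hdC, neg_mul, mul_sum, ← mul_assoc]
    exact congrArg Neg.neg (blockNorm_mul_sqrt (v := fun j ↦ c * wδ j)
      (fun j ↦ (mul_pos hc (hwδ j)).le) (fun d ↦ (hwd d).le) (x - y)).symm
  have hCIcc : C = Set.Icc pm pp := hC.trans (Set.ext fun _ ↦ forall_and)
  have hprod : ∏ d, k d = c ^ n * ∏ d, (wδ (bl d) * √(wd d)) := by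
    simp_rw [hk_def, mul_assoc, prod_mul_distrib, prod_const, card_univ, hn]
  have ha' (d : D) : a d = k d * (pp d - pm d) := by rw [ha]; ring
  simp_rw [hμ, hcdC, hCIcc, integral_const_mul,
    integral_sSup_exp_neg_blockNorm_mul_sub bl hk hple, hprod, ha',
    ← prod_expNegNormMass_fiber_ne_empty bl, expNegNormMass, div_eq_mul_inv, mul_assoc]
end
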